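/- Let M = (X, I) be a matroid, let ω : X → ℝ_{>0} be a weight function, and let k be an integer with 1 ≤ k < rk(M). Then I_ω(k)² ≥ (1 + 1/k)·(1 + 1/(p(k−1) − 1))·I_ω(k−1)·I_ω(k+1), where p(k−1) is the (k−1)-continuation number of M (note that p(k−1) ≥ 2 automatically holds since k < rk(M)). -/

import Mathlib

open scoped Classical BigOperators

noncomputable section

variable {X : Type*} [Fintype X] [DecidableEq X]

/-- The number of independent sets of size `k` of the set system `Indep`. -/
def numIndep (Indep : Finset X → Prop) (k : ℕ) : ℕ :=
  (Finset.univ.filter (fun S : Finset X => Indep S ∧ S.card = k)).card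

/-- The weighted count of independent sets of size `k`:
`I_ω(k) = Σ_{S ∈ I, |S| = k} Π_{x ∈ S} ω(x)`. -/
def wNumIndep (Indep : Finset X → Prop) (ω : X → ℝ) (k : ℕ) : ℝ :=
  ∑ S ∈ Finset.univ.filter (fun S : Finset X => Indep S ∧ S.card = k), ∏ x ∈ S, ω x

/-- The rank of a matroid: the maximal size of an independent set. -/
def matroidRk (Indep : Finset X → Prop) : ℕ :=
  Finset.univ.sup (fun S : Finset X => if Indep S then S.card else 0)

/-- The set of continuations of an independent set `S`. -/
def mCont (Indep : Finset X → Prop) (S : Finset X) : Finset X :=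
  Finset.univ.filter (fun x => x ∉ S ∧ Indep (insert x S))

/-- The parallel class of `x ∈ Cnt(S)`:  the set of continuations `y` with `y ∼_S x`,
i.e. `y = x` or `S ∪ {x,y}` is not independent. -/
def mParClass (Indep : Finset X → Prop) (S : Finset X) (x : X) : Finset X :=
  (mCont Indep S).filter (fun y => y = x ∨ ¬ Indep (insert y (insert x S)))

/-- The set `Par(S)` of parallel classes of `S`. -/
def mParClasses (Indep : Finset X → Prop) (S : Finset X) : Finset (Finset X) :=
  (mCont Indep S).image (mParClass Indep S)

/-- The `k`-continuation number `p(k)`: the maximal number of parallel classes of an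
independent set of size `k`. -/
def contNum (Indep : Finset X → Prop) (k : ℕ) : ℕ :=
  (Finset.univ.filter (fun S : Finset X => Indep S ∧ S.card = k)).sup
    (fun S => (mParClasses Indep S).card)

/-!
The proof is Chan and Pak's combinatorial atlas. Attach to `M` and `r` the quadratic form on
`ℝ ⊕ ℝ^X` whose matrix entries count weighted ordered independent `r`-tuples in the links of at
most two elements of `X`, with the `X × X` block multiplied by a constant `c`. If the form is
nonpositive on the orthogonal complement of `ω`, the reverse Cauchy–Schwarz inequality at `ω` and
the extra basis vector is `c · A(r) · A(r + 2) ≤ A(r + 1)²` for the ordered counts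
`A(i) = i! · I_ω(i)`, which is the theorem when `c = 1 + 1 / (p(k - 1) - 1)` and `r = k - 1`.

This hyperbolicity is proved by induction on `r`. The form of `M` at level `r + 1` is the
`ω`-weighted sum of the forms of the contractions `M / x` at level `r`, and its row at `x` is the
form of `M / x` paired with `ω`. Reverse Cauchy–Schwarz for each contraction then bounds the form
of `M` by the squared norm of its rows, so every nonzero eigenvalue of the normalized form is
negative or at least `1`. Eigenvalues `≥ 1` belong to a reversible Markov chain on the non-loops,
which the exchange axiom makes connected, so they occur only on the line of `ω`.

At level `0` the `X × X` block records which pairs of non-loops are not parallel, and the claim is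
the Cauchy–Schwarz inequality over the at most `p(0)` parallel classes; here `c` is the largest
constant allowed. The `r`-continuation number of `M / x` is at most `p(r + 1)`, so the same `c`
serves throughout.
-/

section ReverseCauchySchwarz

variable {V : Type*} [AddCommGroup V] [Module ℝ V] {B : LinearMap.BilinForm ℝ V} {v : V}

/-- The bilinear form `B` is nonpositive on the `B`-orthogonal complement of `v`. When `0 < B v v`
this says that `B` has exactly one positive direction, and it is the form in which signature
conditions are propagated here. -/
def IsHyperbolicAt (B : LinearMap.BilinForm ℝ V) (v : V) : Prop :=
  ∀ w, B w v = 0 → B w w ≤ 0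

theorem IsHyperbolicAt.mul_le_sq (h : IsHyperbolicAt B v) (hB : B.IsSymm) (hv : 0 < B v v)
    (w : V) : B w w * B v v ≤ B w v ^ 2 := by
  set t := B w v / B v v
  have htv : t * B v v = B w v := div_mul_cancel₀ _ hv.ne'
  have hproj : B (w - t • v) (w - t • v) ≤ 0 := h _ (by simp [htv])
  have hexp : B (w - t • v) (w - t • v) = B w w - t * B w v := by
    simp only [map_sub, map_smul, LinearMap.sub_apply, LinearMap.smul_apply, smul_eq_mul,
      hB.eq v w, htv]
    ring
  calc B w w * B v v ≤ t * B w v * B v v := by gcongr; linarith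
    _ = B w v ^ 2 := by rw [mul_right_comm, htv, sq]

theorem IsHyperbolicAt.of_le_sq (hB : B.IsSymm) (hv : 0 < B v v) (φ : V →ₗ[ℝ] ℝ)
    (hφ : ∀ w, B w w ≤ φ w ^ 2) : IsHyperbolicAt B v := by
  intro w hw
  have hφv : φ v ≠ 0 := fun h => by simpa [h] using hv.trans_le (hφ v)
  -- Moving `w` along `v` into the kernel of `φ` only increases `B w w`.
  set t := φ w / φ v with ht
  have hker : φ (w - t • v) = 0 := by simp [ht, hφv]
  have hexp : B (w - t • v) (w - t • v) = B w w + t ^ 2 * B v v := by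
    simp only [map_sub, map_smul, LinearMap.sub_apply, LinearMap.smul_apply, smul_eq_mul,
      hB.eq v w, hw]
    ring
  have hle := hφ (w - t • v)
  rw [hker, hexp] at hle
  have := mul_nonneg (sq_nonneg t) hv.le
  linarith

end ReverseCauchySchwarz

section Spectral

variable {E : Type*} [NormedAddCommGroup E] [InnerProductSpace ℝ E]

open scoped InnerProductSpace

variable {V : Type*} [AddCommGroup V] [Module ℝ V] {B : LinearMap.BilinForm ℝ V}
  {Φ : V →ₗ[ℝ] E} {Ψ : E →ₗ[ℝ] V}

theorem isSymmetric_comp_of_adjoint (hB : B.IsSymm) (hadj : ∀ w g, B w (Ψ g) = ⟪Φ w, g⟫_ℝ) :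
    (Φ ∘ₗ Ψ).IsSymmetric := fun g h => by
  rw [LinearMap.comp_apply, LinearMap.comp_apply, ← hadj, real_inner_comm, ← hadj, hB.eq]

variable [FiniteDimensional ℝ E]

theorem inner_map_self_nonpos_of_eigenspace_le_span {T : E →ₗ[ℝ] E} (hT : T.IsSymmetric)
    (hle : ∀ g, ⟪T g, g⟫_ℝ ≤ ‖T g‖ ^ 2) {v₀ : E}
    (hsimple : ∀ l : ℝ, 1 ≤ l → Module.End.eigenspace T l ≤ ℝ ∙ v₀) {g : E} (hg : ⟪v₀, g⟫_ℝ = 0) :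
    ⟪T g, g⟫_ℝ ≤ 0 := by
  set b := hT.eigenvectorBasis rfl
  set μ := hT.eigenvalues rfl
  have hb : ∀ i, T (b i) = μ i • b i := hT.apply_eigenvectorBasis rfl
  -- The hypothesis on `T` reads `μ i ≤ μ i ^ 2` on eigenvectors.
  have hgap : ∀ i, μ i ≤ 0 ∨ 1 ≤ μ i := by
    intro i
    have h := hle (b i)
    simp only [hb, inner_smul_left, real_inner_self_eq_norm_sq, norm_smul, b.norm_eq_one,
      Real.norm_eq_abs, conj_trivial, one_pow, mul_one, sq_abs] at h
    by_contra! hμ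
    nlinarith
  rw [← b.sum_inner_mul_inner]
  refine Finset.sum_nonpos fun i _ => ?_
  rw [hT, hb, inner_smul_right, real_inner_comm g (b i), mul_assoc]
  rcases hgap i with hi | hi
  · exact mul_nonpos_of_nonpos_of_nonneg hi (mul_self_nonneg _)
  · obtain ⟨c, hc⟩ := Submodule.mem_span_singleton.1
      (hsimple _ hi (Module.End.mem_eigenspace_iff.2 (hb i)))
    simp [← hc, inner_smul_right, hg, real_inner_comm]

theorem range_le_range_comp_of_adjoint (hB : B.IsSymm) (hadj : ∀ w g, B w (Ψ g) = ⟪Φ w, g⟫_ℝ)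
    (hle : ∀ w, B w w ≤ ‖Φ w‖ ^ 2) : Φ.range ≤ (Φ ∘ₗ Ψ).range := by
  have hsymm := isSymmetric_comp_of_adjoint hB hadj
  rw [← (Φ ∘ₗ Ψ).range.orthogonal_orthogonal, hsymm.orthogonal_range]
  rintro _ ⟨w, rfl⟩ g hg
  have hg : Φ (Ψ g) = 0 := hg
  -- `Φ` is constant on the line `w + τ • Ψ g`, along which `B` is affine, hence constant.
  have hline : ∀ τ : ℝ, B w w + 2 * τ * ⟪Φ w, g⟫_ℝ ≤ ‖Φ w‖ ^ 2 := by
    intro τ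
    have h := hle (w + τ • Ψ g)
    simp only [map_add, map_smul, LinearMap.add_apply, LinearMap.smul_apply, smul_eq_mul,
      hB.eq (Ψ g) w, hadj, hg, smul_zero, add_zero, inner_zero_left, mul_zero] at h
    linarith
  rw [real_inner_comm]
  by_contra hne
  have h := hline ((‖Φ w‖ ^ 2 - B w w + 1) / (2 * ⟪Φ w, g⟫_ℝ))
  have : 2 * ((‖Φ w‖ ^ 2 - B w w + 1) / (2 * ⟪Φ w, g⟫_ℝ)) * ⟪Φ w, g⟫_ℝ = ‖Φ w‖ ^ 2 - B w w + 1 := by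
    field_simp
  linarith

theorem IsHyperbolicAt.of_adjoint {v : V} (hB : B.IsSymm)
    (hadj : ∀ w g, B w (Ψ g) = ⟪Φ w, g⟫_ℝ) (hle : ∀ w, B w w ≤ ‖Φ w‖ ^ 2)
    (hv : ∀ w, B w v = ⟪Φ w, Φ v⟫_ℝ)
    (hsimple : ∀ l : ℝ, 1 ≤ l → Module.End.eigenspace (Φ ∘ₗ Ψ) l ≤ ℝ ∙ Φ v) :
    IsHyperbolicAt B v := by
  intro w hw
  obtain ⟨m, hm⟩ := range_le_range_comp_of_adjoint hB hadj hle ⟨w, rfl⟩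
  have hm : Φ (Ψ m) = Φ w := hm
  have hmv : ⟪Φ v, m⟫_ℝ = 0 := by rw [← hadj, hB.eq, hv, hm, ← hv, hw]
  have hmm : ⟪Φ w, m⟫_ℝ ≤ 0 := by
    rw [← hm]
    exact inner_map_self_nonpos_of_eigenspace_le_span (isSymmetric_comp_of_adjoint hB hadj)
      (fun g => (hadj _ g).symm.trans_le (hle _)) hsimple hmv
  have hker : B (w - Ψ m) (w - Ψ m) ≤ 0 := by simpa [hm] using hle (w - Ψ m)
  have hexp : B (w - Ψ m) (w - Ψ m) = B w w - ⟪Φ w, m⟫_ℝ := by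
    simp only [map_sub, LinearMap.sub_apply, hadj, hB.eq (Ψ m) w, hm]
    ring
  linarith

end Spectral

section MarkovChain

variable {ι : Type*} [Fintype ι]

theorem eq_of_sum_mul_sq_le_of_connected {C : ι → ι → ℝ} (hsymm : ∀ i j, C i j = C j i)
    (hnonneg : ∀ i j, 0 ≤ C i j) (hconn : ∀ i j, Relation.ReflTransGen (fun i j => 0 < C i j) i j)
    {f : ι → ℝ} (hf : ∑ i, (∑ j, C i j) * f i ^ 2 ≤ ∑ i, ∑ j, C i j * (f i * f j)) (i j : ι) :
    f i = f j := by
  have henergy : ∑ i, ∑ j, C i j * (f i - f j) ^ 2 =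
      2 * (∑ i, (∑ j, C i j) * f i ^ 2 - ∑ i, ∑ j, C i j * (f i * f j)) := by
    have hswap : ∑ i, ∑ j, C i j * f j ^ 2 = ∑ i, ∑ j, C i j * f i ^ 2 := by
      rw [Finset.sum_comm]
      simp only [hsymm]
    simp only [sub_sq, mul_add, mul_sub, Finset.sum_add_distrib, Finset.sum_sub_distrib, hswap,
      Finset.sum_mul, Finset.mul_sum, two_mul, add_mul]
    ring
  have hterm : ∀ i j, 0 ≤ C i j * (f i - f j) ^ 2 :=
    fun i j => mul_nonneg (hnonneg i j) (sq_nonneg _)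
  have hzero : ∑ i, ∑ j, C i j * (f i - f j) ^ 2 = 0 :=
    le_antisymm (by linarith) (Finset.sum_nonneg fun i _ => Finset.sum_nonneg fun j _ => hterm i j)
  have hadj : ∀ i j, 0 < C i j → f i = f j := by
    intro i j hij
    have hi := (Finset.sum_eq_zero_iff_of_nonneg
      fun i _ => Finset.sum_nonneg fun j _ => hterm i j).1 hzero i (Finset.mem_univ i)
    have hj := (Finset.sum_eq_zero_iff_of_nonneg fun j _ => hterm i j).1 hi j (Finset.mem_univ j)
    simpa [hij.ne', sub_eq_zero] using hj
  induction hconn i j with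
  | refl => rfl
  | tail _ hjk ih => exact ih.trans (hadj _ _ hjk)

end MarkovChain

section LocalToGlobal

variable {ι V : Type*} [AddCommGroup V] [Module ℝ V] {B : LinearMap.BilinForm ℝ V} {v : V}

/-- The analysis operator `w ↦ (B w (e i))ᵢ` of the family `e`, with values in Euclidean space. -/
def analysisMap (B : LinearMap.BilinForm ℝ V) (e : ι → V) : V →ₗ[ℝ] EuclideanSpace ℝ ι :=
  (WithLp.linearEquiv 2 ℝ (ι → ℝ)).symm ∘ₗ LinearMap.pi fun i => B.flip (e i)

theorem analysisMap_apply (e : ι → V) (w : V) (i : ι) : analysisMap B e w i = B w (e i) := rfl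

variable [Fintype ι]

/-- The synthesis operator `g ↦ ∑ i, g i • e i` of the family `e`; it is `B`-adjoint to
`analysisMap B e`. -/
def synthesisMap (e : ι → V) : EuclideanSpace ℝ ι →ₗ[ℝ] V :=
  Fintype.linearCombination ℝ e ∘ₗ (WithLp.linearEquiv 2 ℝ (ι → ℝ)).toLinearMap

theorem synthesisMap_apply (e : ι → V) (g : EuclideanSpace ℝ ι) :
    synthesisMap e g = ∑ i, g i • e i := rfl

theorem inner_analysisMap (e : ι → V) (w : V) (g : EuclideanSpace ℝ ι) :
    inner ℝ (analysisMap B e w) g = ∑ i, B w (e i) * g i := by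
  simp [PiLp.inner_apply, analysisMap_apply, mul_comm]

theorem apply_synthesisMap (e : ι → V) (w : V) (g : EuclideanSpace ℝ ι) :
    B w (synthesisMap e g) = inner ℝ (analysisMap B e w) g := by
  simp [inner_analysisMap, synthesisMap_apply, mul_comm]

theorem norm_analysisMap_sq (e : ι → V) (w : V) :
    ‖analysisMap B e w‖ ^ 2 = ∑ i, B w (e i) ^ 2 := by
  simp [EuclideanSpace.norm_sq_eq, analysisMap_apply]

theorem sum_sum_mul_eq_inner_analysis_synthesis (hB : B.IsSymm) (e : ι → V)
    (g : EuclideanSpace ℝ ι) :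
    ∑ i, ∑ j, g i * g j * B (e i) (e j) = inner ℝ (analysisMap B e (synthesisMap e g)) g := by
  rw [inner_analysisMap]
  refine Finset.sum_congr rfl fun i _ => ?_
  rw [hB.eq, apply_synthesisMap, inner_analysisMap, Finset.sum_mul]
  exact Finset.sum_congr rfl fun j _ => by ring

theorem eigenspace_analysis_synthesis_le_span {e : ι → V} (hB : B.IsSymm)
    (hv : ∀ w, B w v = ∑ i, B w (e i) * B v (e i)) (hpos : ∀ i, 0 < B v (e i))
    (hnonneg : ∀ i j, 0 ≤ B (e i) (e j))
    (hconn : ∀ i j, Relation.ReflTransGen (fun i j => 0 < B (e i) (e j)) i j)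
    {l : ℝ} (hl : 1 ≤ l) :
    Module.End.eigenspace (analysisMap B e ∘ₗ synthesisMap e) l ≤ ℝ ∙ analysisMap B e v := by
  intro g hg
  rw [Module.End.mem_eigenspace_iff, LinearMap.comp_apply] at hg
  rcases isEmpty_or_nonempty ι with hι | ⟨⟨i₀⟩⟩
  · rw [Subsingleton.elim g 0]
    exact zero_mem _
  set f : ι → ℝ := fun i => g i / B v (e i)
  have hfg : ∀ i, B v (e i) * f i = g i := fun i => mul_div_cancel₀ _ (hpos i).ne'
  -- The Markov chain with conductances `C` is reversible; its energy at `f` is `(1 - l) ‖g‖²`.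
  let C : ι → ι → ℝ := fun i j => B v (e i) * B v (e j) * B (e i) (e j)
  have hrow : ∀ i, ∑ j, C i j = B v (e i) ^ 2 := fun i =>
    calc ∑ j, C i j = B v (e i) * ∑ j, B (e i) (e j) * B v (e j) := by
          rw [Finset.mul_sum]
          exact Finset.sum_congr rfl fun j _ => by ring
      _ = B v (e i) ^ 2 := by rw [← hv, hB.eq, sq]
  have hdiag : ∑ i, (∑ j, C i j) * f i ^ 2 = ‖g‖ ^ 2 := by
    simp only [hrow, ← mul_pow, hfg, EuclideanSpace.norm_sq_eq, Real.norm_eq_abs, sq_abs]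
  have hform : ∑ i, ∑ j, C i j * (f i * f j) = l * ‖g‖ ^ 2 := by
    rw [← real_inner_self_eq_norm_sq, ← real_inner_smul_left, ← hg,
      ← sum_sum_mul_eq_inner_analysis_synthesis hB]
    refine Finset.sum_congr rfl fun i _ => Finset.sum_congr rfl fun j _ => ?_
    rw [← hfg i, ← hfg j]
    ring
  have hconst : ∀ i j, f i = f j := by
    refine eq_of_sum_mul_sq_le_of_connected (C := C) (fun i j => ?_) (fun i j => ?_)
      (fun i j => .mono (fun i j hij => ?_) _ _ (hconn i j)) ?_
    · simp only [C, hB.eq (e i) (e j), mul_comm (B v (e i))]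
    · exact mul_nonneg (mul_nonneg (hpos i).le (hpos j).le) (hnonneg i j)
    · exact mul_pos (mul_pos (hpos i) (hpos j)) hij
    · rw [hdiag, hform]
      exact le_mul_of_one_le_left (sq_nonneg _) hl
  refine Submodule.mem_span_singleton.2 ⟨f i₀, ?_⟩
  ext i
  rw [PiLp.smul_apply, smul_eq_mul, analysisMap_apply, hconst i₀ i, mul_comm, hfg]

theorem IsHyperbolicAt.of_le_sum_sq {e : ι → V} (hB : B.IsSymm)
    (hle : ∀ w, B w w ≤ ∑ i, B w (e i) ^ 2)
    (hv : ∀ w, B w v = ∑ i, B w (e i) * B v (e i)) (hpos : ∀ i, 0 < B v (e i))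
    (hnonneg : ∀ i j, 0 ≤ B (e i) (e j))
    (hconn : ∀ i j, Relation.ReflTransGen (fun i j => 0 < B (e i) (e j)) i j) :
    IsHyperbolicAt B v :=
  .of_adjoint hB (apply_synthesisMap e) (fun w => (norm_analysisMap_sq e w).symm ▸ hle w)
    (fun w => by rw [hv, inner_analysisMap]; rfl)
    fun _ hl => eigenspace_analysis_synthesis_le_span hB hv hpos hnonneg hconn hl

theorem IsHyperbolicAt.of_local {ω : ι → ℝ} (hω : ∀ i, 0 < ω i) {e : ι → V}
    {Bloc : ι → LinearMap.BilinForm ℝ V} (hB : B.IsSymm)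
    (hsum : ∀ w, B w w = ∑ i, ω i * Bloc i w w) (hrow : ∀ i w, B w (e i) = Bloc i w v)
    (hv : ∀ w, B w v = ∑ i, ω i * B w (e i)) (hsymm : ∀ i, (Bloc i).IsSymm)
    (hpos : ∀ i, 0 < Bloc i v v) (hloc : ∀ i, IsHyperbolicAt (Bloc i) v)
    (hnonneg : ∀ i j, 0 ≤ B (e i) (e j))
    (hconn : ∀ i j, Relation.ReflTransGen (fun i j => 0 < B (e i) (e j)) i j) :
    IsHyperbolicAt B v := by
  set d : ι → ℝ := fun i => √(ω i / Bloc i v v)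
  have hd : ∀ i, 0 < d i := fun i => Real.sqrt_pos.2 (div_pos (hω i) (hpos i))
  have hd_sq : ∀ i, d i * d i = ω i / Bloc i v v :=
    fun i => Real.mul_self_sqrt (div_pos (hω i) (hpos i)).le
  have hB_scaled : ∀ i j, B (d i • e i) (d j • e j) = d i * d j * B (e i) (e j) := fun i j => by
    simp only [map_smul, LinearMap.smul_apply, smul_eq_mul]
    ring
  refine .of_le_sum_sq (e := fun i => d i • e i) hB (fun w => ?_) (fun w => ?_) (fun i => ?_)
    (fun i j => ?_) fun i j => .mono (fun i j hij => ?_) _ _ (hconn i j)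
  · rw [hsum]
    refine Finset.sum_le_sum fun i _ => ?_
    calc ω i * Bloc i w w ≤ ω i * (Bloc i w v ^ 2 / Bloc i v v) := by
          gcongr
          · exact (hω i).le
          · exact (le_div_iff₀ (hpos i)).2 ((hloc i).mul_le_sq (hsymm i) (hpos i) w)
      _ = B w (d i • e i) ^ 2 := by
          rw [map_smul, smul_eq_mul, mul_pow, sq (d i), hd_sq, hrow]
          ring
  · rw [hv]
    refine Finset.sum_congr rfl fun i _ => ?_
    have hi := (hpos i).ne'
    calc ω i * B w (e i) = d i * d i * (B w (e i) * B v (e i)) := by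
          rw [hd_sq, hrow i v]
          field_simp
      _ = B w (d i • e i) * B v (d i • e i) := by
          simp only [map_smul, smul_eq_mul]
          ring
  · rw [map_smul, smul_eq_mul, hrow]
    exact mul_pos (hd i) (hpos i)
  · rw [hB_scaled]
    exact mul_nonneg (mul_pos (hd i) (hd j)).le (hnonneg i j)
  · rw [hB_scaled]
    exact mul_pos (mul_pos (hd i) (hd j)) hij

end LocalToGlobal

section SetSystem

variable {α : Type*} [DecidableEq α] {M : Finset α → Prop} {S : Finset α} {x y z : α}

/-- The independence axioms of a matroid, for a family of finite sets given as a predicate (the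
encoding under which `wNumIndep`, `matroidRk` and `contNum` take their argument). -/
structure IsMatroid (M : Finset α → Prop) : Prop where
  nonempty : ∃ S, M S
  hereditary : ∀ S T, S ⊆ T → M T → M S
  exchange : ∀ S T, M S → M T → S.card < T.card → ∃ x ∈ T, x ∉ S ∧ M (insert x S)

/-- The link of `x` in a set system: the sets avoiding `x` that stay in the system when `x` is
added. For a matroid this is the contraction by `x`, except that it is the empty family (hence not
a matroid) when `x` is a loop. -/
def link (M : Finset α → Prop) (x : α) : Finset α → Prop :=
  fun S => x ∉ S ∧ M (insert x S)

theorem link_comm (M : Finset α → Prop) (x y : α) : link (link M x) y = link (link M y) x := by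
  ext S
  simp only [link, Finset.mem_insert, not_or, Finset.insert_comm x y S, eq_comm (a := x)]
  tauto

theorem link_empty_iff : link M x ∅ ↔ M {x} := by
  simp [link]

theorem link_singleton_iff : link M x {y} ↔ x ≠ y ∧ M {x, y} := by
  simp [link]

namespace IsMatroid

theorem indep_empty (hM : IsMatroid M) : M ∅ :=
  hM.nonempty.elim fun S hS => hM.hereditary _ S (Finset.empty_subset S) hS

theorem isMatroid_link (hM : IsMatroid M) (hx : M {x}) : IsMatroid (link M x) where
  nonempty := ⟨∅, link_empty_iff.2 hx⟩
  hereditary S T hST hT := ⟨fun h => hT.1 (hST h),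
    hM.hereditary _ _ (Finset.insert_subset_insert x hST) hT.2⟩
  exchange S T hS hT hcard := by
    obtain ⟨z, hzT, hzS, hz⟩ := hM.exchange _ _ hS.2 hT.2 (by
      rwa [Finset.card_insert_of_notMem hS.1, Finset.card_insert_of_notMem hT.1,
        Nat.add_lt_add_iff_right])
    rw [Finset.mem_insert, not_or] at hzS
    refine ⟨z, Finset.mem_of_mem_insert_of_ne hzT hzS.1, hzS.2, ?_, ?_⟩
    · simpa only [Finset.mem_insert, not_or] using ⟨Ne.symm hzS.1, hS.1⟩
    · rwa [Finset.insert_comm]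

theorem not_link_of_loop (hM : IsMatroid M) (hx : ¬ M {x}) (S : Finset α) : ¬ link M x S :=
  fun hS => hx (hM.hereditary _ _ (by simp) hS.2)

/-- Transitivity of parallelism over `S`, in contrapositive form. -/
theorem indep_insert_or (hM : IsMatroid M) (hz : M (insert z S)) (hx : x ∉ insert y S) (hy : y ∉ S)
    (hxy : M (insert x (insert y S))) :
    M (insert x (insert z S)) ∨ M (insert y (insert z S)) := by
  obtain ⟨u, hu, huz, hins⟩ := hM.exchange _ _ hz hxy (by
    rw [Finset.card_insert_of_notMem hx, Finset.card_insert_of_notMem hy]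
    exact Nat.lt_succ_of_le (Finset.card_insert_le z S))
  rw [Finset.mem_insert, not_or] at huz
  rw [Finset.mem_insert, Finset.mem_insert] at hu
  rcases hu with rfl | rfl | huS
  · exact .inl hins
  · exact .inr hins
  · exact absurd huS huz.2

end IsMatroid

end SetSystem

section Rank

variable {α : Type*} [Fintype α] {M : Finset α → Prop} {S : Finset α} {x : α} {n : ℕ}

theorem card_le_matroidRk (hS : M S) : S.card ≤ matroidRk M := by
  have h := Finset.le_sup (f := fun S => if M S then S.card else 0) (Finset.mem_univ S)
  rwa [if_pos hS] at h

theorem exists_matroidRk_eq_card (hM : ∃ S, M S) : ∃ S, M S ∧ matroidRk M = S.card := by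
  obtain ⟨S, -, hS⟩ := Finset.exists_mem_eq_sup Finset.univ Finset.univ_nonempty
    fun S : Finset α => if M S then S.card else 0
  by_cases hSM : M S
  · exact ⟨S, hSM, hS.trans (if_pos hSM)⟩
  · obtain ⟨T, hT⟩ := hM
    have hrk : matroidRk M = 0 := hS.trans (if_neg hSM)
    exact ⟨T, hT, hrk.trans (Nat.le_zero.1 (hrk ▸ card_le_matroidRk hT)).symm⟩

variable [DecidableEq α]

namespace IsMatroid

theorem exists_superset_card_eq (hM : IsMatroid M) (hS : M S) (hSn : S.card ≤ n)
    (hn : n ≤ matroidRk M) : ∃ T, S ⊆ T ∧ M T ∧ T.card = n := by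
  induction n, hSn using Nat.le_induction with
  | base => exact ⟨S, subset_rfl, hS, rfl⟩
  | succ n _ ih =>
    obtain ⟨T, hST, hT, rfl⟩ := ih (Nat.le_of_succ_le hn)
    obtain ⟨U, hU, hUrk⟩ := exists_matroidRk_eq_card hM.nonempty
    obtain ⟨x, -, hxT, hx⟩ := hM.exchange T U hT hU (hUrk ▸ hn)
    exact ⟨insert x T, hST.trans (Finset.subset_insert x T), hx, Finset.card_insert_of_notMem hxT⟩

theorem matroidRk_le_link_add_one (hM : IsMatroid M) (hx : M {x}) :
    matroidRk M ≤ matroidRk (link M x) + 1 := by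
  obtain ⟨T, hxT, hT, hcard⟩ := hM.exists_superset_card_eq hx (card_le_matroidRk hx) le_rfl
  rw [Finset.singleton_subset_iff] at hxT
  have hlink : link M x (T.erase x) :=
    ⟨Finset.notMem_erase x T, by rwa [Finset.insert_erase hxT]⟩
  rw [← hcard, ← Finset.card_erase_add_one hxT]
  exact Nat.add_le_add_right (card_le_matroidRk hlink) 1

theorem pair_connected (hM : IsMatroid M) (hrk : 2 ≤ matroidRk M) (x y : {x // M {x}}) :
    Relation.ReflTransGen (fun x y : {x // M {x}} => x ≠ y ∧ M {x.1, y.1}) x y := by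
  rcases eq_or_ne x y with rfl | hxy
  · exact .refl
  by_cases hpair : M {x.1, y.1}
  · exact .single ⟨hxy, hpair⟩
  obtain ⟨T, hxT, hT, hcard⟩ := hM.exists_superset_card_eq x.2 (by simp) hrk
  obtain ⟨z, hzT, hzx⟩ := Finset.exists_mem_ne (hcard ▸ one_lt_two) x.1
  have hxz : M {x.1, z} :=
    hM.hereditary _ T (Finset.insert_subset (by simpa using hxT) (by simpa)) hT
  have hz : M {z} := hM.hereditary _ _ (by simp) hxz
  rcases hM.indep_insert_or (S := ∅) y.2 (by simpa using hzx.symm) (by simp) hxz with hxy' | hzy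
  · exact absurd hxy' hpair
  have hzy_ne : z ≠ y.1 := fun h => hpair (h ▸ hxz)
  exact .head (b := ⟨z, hz⟩) ⟨Subtype.coe_ne_coe.1 hzx.symm, hxz⟩
    (.single ⟨Subtype.coe_ne_coe.1 hzy_ne, hzy⟩)

end IsMatroid

end Rank

section ContinuationNumber

variable {α : Type*} [Fintype α] [DecidableEq α] {M : Finset α → Prop} {S : Finset α} {x y : α}
  {k : ℕ}

theorem mem_mCont : x ∈ mCont M S ↔ x ∉ S ∧ M (insert x S) := by
  simp [mCont]

theorem mem_mParClass :
    y ∈ mParClass M S x ↔ y ∈ mCont M S ∧ (y = x ∨ ¬ M (insert y (insert x S))) :=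
  Finset.mem_filter

theorem card_mParClasses_le_contNum (hS : M S) : (mParClasses M S).card ≤ contNum M S.card :=
  Finset.le_sup (f := fun T => (mParClasses M T).card)
    (Finset.mem_filter.2 ⟨Finset.mem_univ S, hS, rfl⟩)

theorem mCont_link (hx : x ∉ S) : mCont (link M x) S = mCont M (insert x S) := by
  ext y
  simp only [mem_mCont, link, Finset.mem_insert, not_or, hx, Finset.insert_comm x y S,
    eq_comm (a := x)]
  tauto

theorem mParClass_link (hx : x ∉ S) (hy : y ∈ mCont M (insert x S)) :
    mParClass (link M x) S y = mParClass M (insert x S) y := by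
  ext z
  simp only [mem_mParClass, mCont_link hx, and_congr_right_iff]
  intro hz
  simp only [mem_mCont, Finset.mem_insert, not_or] at hy hz
  simp only [link, Finset.mem_insert, not_or, hx, eq_comm (a := x), hy.1.1, hz.1.1,
    not_false_eq_true, true_and, Finset.insert_comm x]

theorem contNum_link_le (M : Finset α → Prop) (x : α) (k : ℕ) :
    contNum (link M x) k ≤ contNum M (k + 1) := by
  refine Finset.sup_le fun S hS => ?_
  obtain ⟨⟨hxS, hxS_indep⟩, rfl⟩ := (Finset.mem_filter.1 hS).2
  have hpar : mParClasses (link M x) S = mParClasses M (insert x S) := by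
    rw [mParClasses, mParClasses, mCont_link hxS]
    exact Finset.image_congr fun y hy => mParClass_link hxS hy
  rw [hpar, ← Finset.card_insert_of_notMem hxS]
  exact card_mParClasses_le_contNum hxS_indep

namespace IsMatroid

theorem mParClass_subset (hM : IsMatroid M) (hx : x ∈ mCont M S) (hy : y ∈ mParClass M S x) :
    mParClass M S x ⊆ mParClass M S y := by
  intro z hz
  rw [mem_mParClass] at hy hz ⊢
  refine ⟨hz.1, or_iff_not_imp_left.2 fun hzy hind => ?_⟩
  have hor := hM.indep_insert_or (mem_mCont.1 hx).2
    (by simpa only [Finset.mem_insert, not_or] using ⟨hzy, (mem_mCont.1 hz.1).1⟩)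
    (mem_mCont.1 hy.1).1 hind
  grind [Finset.insert_comm x y S]

theorem mParClass_eq_iff (hM : IsMatroid M) (hx : x ∈ mCont M S) (hy : y ∈ mCont M S) :
    mParClass M S x = mParClass M S y ↔ x = y ∨ ¬ M (insert x (insert y S)) := by
  constructor
  · intro h
    have hxx : x ∈ mParClass M S x := mem_mParClass.2 ⟨hx, .inl rfl⟩
    exact (mem_mParClass.1 (h ▸ hxx)).2
  · intro h
    refine (hM.mParClass_subset hx (mem_mParClass.2 ⟨hy, ?_⟩)).antisymm
      (hM.mParClass_subset hy (mem_mParClass.2 ⟨hx, h⟩))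
    rwa [eq_comm, Finset.insert_comm]

theorem two_le_contNum (hM : IsMatroid M) (hk : k + 2 ≤ matroidRk M) : 2 ≤ contNum M k := by
  obtain ⟨S, -, hS, rfl⟩ := hM.exists_superset_card_eq hM.indep_empty (Nat.zero_le k) (by lia)
  obtain ⟨T, hST, hT, hcard⟩ := hM.exists_superset_card_eq hS (Nat.le_add_right _ 2) hk
  obtain ⟨x, y, hxy, hdiff⟩ : ∃ x y, x ≠ y ∧ T \ S = {x, y} := by
    rw [← Finset.card_eq_two, Finset.card_sdiff_of_subset hST]
    lia
  have hmem : ∀ z, z ∈ T \ S → z ∈ mCont M S := fun z hz => by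
    rw [Finset.mem_sdiff] at hz
    exact mem_mCont.2 ⟨hz.2, hM.hereditary _ T (Finset.insert_subset hz.1 hST) hT⟩
  have hx := hmem x (by simp [hdiff])
  have hy := hmem y (by simp [hdiff])
  have hpair : M (insert x (insert y S)) := by
    rwa [← Finset.singleton_union y S, ← Finset.insert_union, ← hdiff,
      Finset.sdiff_union_of_subset hST]
  have hne : mParClass M S x ≠ mParClass M S y := by
    simp [hM.mParClass_eq_iff hx hy, hxy, hpair]
  calc 2 ≤ (mParClasses M S).card := Finset.one_lt_card.2
        ⟨_, Finset.mem_image_of_mem _ hx, _, Finset.mem_image_of_mem _ hy, hne⟩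
    _ ≤ contNum M S.card := card_mParClasses_le_contNum hS

end IsMatroid

end ContinuationNumber

section WeightedCount

variable {α : Type*} [Fintype α] {M : Finset α → Prop} {ω : α → ℝ} {r : ℕ}

/-- The weighted number of ordered independent `r`-tuples of distinct elements. Counting tuples
makes the recursion through links (`sum_mul_wOrderedIndep_link`) free of combinatorial factors. -/
def wOrderedIndep (M : Finset α → Prop) (ω : α → ℝ) (r : ℕ) : ℝ :=
  r.factorial * wNumIndep M ω r

theorem wOrderedIndep_nonneg (hω : ∀ x, 0 ≤ ω x) : 0 ≤ wOrderedIndep M ω r :=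
  mul_nonneg (Nat.cast_nonneg _)
    (Finset.sum_nonneg fun _ _ => Finset.prod_nonneg fun x _ => hω x)

theorem wOrderedIndep_card_pos (hω : ∀ x, 0 < ω x) {S : Finset α} (hS : M S) :
    0 < wOrderedIndep M ω S.card :=
  mul_pos (Nat.cast_pos.2 S.card.factorial_pos)
    (Finset.sum_pos (fun _ _ => Finset.prod_pos fun x _ => hω x)
      ⟨S, Finset.mem_filter.2 ⟨Finset.mem_univ S, hS, rfl⟩⟩)

theorem wOrderedIndep_eq_zero (hM : ∀ S, ¬ M S) (ω : α → ℝ) (r : ℕ) : wOrderedIndep M ω r = 0 := by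
  simp [wOrderedIndep, wNumIndep, hM]

theorem wOrderedIndep_zero (M : Finset α → Prop) (ω : α → ℝ) :
    wOrderedIndep M ω 0 = if M ∅ then 1 else 0 := by
  have hfilter : Finset.univ.filter (fun S : Finset α => M S ∧ S.card = 0) =
      ({∅} : Finset (Finset α)).filter M := by
    ext S
    simp [and_comm]
  rw [wOrderedIndep, wNumIndep, hfilter, Finset.sum_filter]
  simp

theorem wOrderedIndep_mul_le_sq_iff (M : Finset α → Prop) (ω : α → ℝ) (c : ℝ) (r : ℕ) :
    c * wOrderedIndep M ω r * wOrderedIndep M ω (r + 2) ≤ wOrderedIndep M ω (r + 1) ^ 2 ↔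
      (1 + 1 / ((r + 1 : ℕ) : ℝ)) * c * wNumIndep M ω r * wNumIndep M ω (r + 2) ≤
        wNumIndep M ω (r + 1) ^ 2 := by
  have hfact : (0 : ℝ) < ((r + 1).factorial : ℝ) ^ 2 := by positivity
  have hlhs : c * wOrderedIndep M ω r * wOrderedIndep M ω (r + 2) = (r + 1).factorial ^ 2 *
      ((1 + 1 / ((r + 1 : ℕ) : ℝ)) * c * wNumIndep M ω r * wNumIndep M ω (r + 2)) := by
    simp only [wOrderedIndep, Nat.factorial_succ]
    push_cast
    field_simp
  rw [hlhs, wOrderedIndep, mul_pow, mul_le_mul_iff_right₀ hfact]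

variable [DecidableEq α]

theorem mul_wNumIndep_link (M : Finset α → Prop) (ω : α → ℝ) (r : ℕ) (x : α) :
    ω x * wNumIndep (link M x) ω r =
      ∑ T with M T ∧ T.card = r + 1, if x ∈ T then ∏ y ∈ T, ω y else 0 := by
  rw [wNumIndep, Finset.mul_sum, ← Finset.sum_filter]
  refine Finset.sum_nbij' (insert x ·) (Finset.erase · x) ?_ ?_ ?_ ?_ ?_
  all_goals simp only [Finset.mem_filter, Finset.mem_univ, true_and]
  · rintro S ⟨⟨hxS, hS⟩, rfl⟩
    exact ⟨⟨hS, Finset.card_insert_of_notMem hxS⟩, Finset.mem_insert_self x S⟩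
  · rintro T ⟨⟨hT, hcard⟩, hxT⟩
    refine ⟨⟨Finset.notMem_erase x T, by rwa [Finset.insert_erase hxT]⟩, ?_⟩
    rw [Finset.card_erase_of_mem hxT, hcard, Nat.add_sub_cancel]
  · exact fun S hS => Finset.erase_insert hS.1.1
  · exact fun T hT => Finset.insert_erase hT.2
  · exact fun S hS => (Finset.prod_insert hS.1.1).symm

theorem sum_mul_wNumIndep_link (M : Finset α → Prop) (ω : α → ℝ) (r : ℕ) :
    ∑ x, ω x * wNumIndep (link M x) ω r = (r + 1) * wNumIndep M ω (r + 1) := by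
  simp only [mul_wNumIndep_link]
  rw [Finset.sum_comm, wNumIndep, Finset.mul_sum]
  refine Finset.sum_congr rfl fun T hT => ?_
  rw [← Finset.sum_filter, Finset.filter_mem_eq_inter, Finset.univ_inter, Finset.sum_const,
    (Finset.mem_filter.1 hT).2.2, nsmul_eq_mul, Nat.cast_succ]

theorem sum_mul_wOrderedIndep_link (M : Finset α → Prop) (ω : α → ℝ) (r : ℕ) :
    ∑ x, ω x * wOrderedIndep (link M x) ω r = wOrderedIndep M ω (r + 1) := by
  simp only [wOrderedIndep, mul_left_comm (ω _), ← Finset.mul_sum, sum_mul_wNumIndep_link]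
  rw [Nat.factorial_succ]
  push_cast
  ring

end WeightedCount

section Atlas

variable {α : Type*} [Fintype α] [DecidableEq α] {M : Finset α → Prop} {ω : α → ℝ} {c : ℝ} {r : ℕ}

/-- The matrix of the Chan–Pak combinatorial atlas attached to a set system: it is indexed by the
ground set together with the extra index `none`, and its entries are weighted counts of ordered
independent tuples in the links of at most two elements. -/
def atlasMatrix (M : Finset α → Prop) (ω : α → ℝ) (c : ℝ) (r : ℕ) :
    Matrix (Option α) (Option α) ℝ
  | none, none => wOrderedIndep M ω r
  | none, some x => wOrderedIndep (link M x) ω r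
  | some x, none => wOrderedIndep (link M x) ω r
  | some x, some y => c * wOrderedIndep (link (link M x) y) ω r

/-- The bilinear form of `atlasMatrix`. -/
def atlasForm (M : Finset α → Prop) (ω : α → ℝ) (c : ℝ) (r : ℕ) :
    LinearMap.BilinForm ℝ (Option α → ℝ) :=
  Matrix.toBilin' (atlasMatrix M ω c r)

/-- The weight function extended by `0` to the extra index of `atlasMatrix`; the atlas forms are
hyperbolic at this vector. -/
def weightVec (ω : α → ℝ) : Option α → ℝ :=
  fun i => i.elim 0 ω

theorem atlasForm_isSymm (M : Finset α → Prop) (ω : α → ℝ) (c : ℝ) (r : ℕ) :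
    (atlasForm M ω c r).IsSymm := by
  refine Matrix.isSymm_toBilin'_iff_isSymm.2 (Matrix.IsSymm.ext fun i j => ?_)
  rcases i with _ | x <;> rcases j with _ | y <;> simp only [atlasMatrix, link_comm M]

theorem atlasMatrix_succ (M : Finset α → Prop) (ω : α → ℝ) (c : ℝ) (r : ℕ) :
    atlasMatrix M ω c (r + 1) = ∑ x, ω x • atlasMatrix (link M x) ω c r := by
  ext i j
  rw [Matrix.sum_apply]
  simp only [Matrix.smul_apply, smul_eq_mul]
  rcases i with _ | y <;> rcases j with _ | z <;> simp only [atlasMatrix]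
  · exact (sum_mul_wOrderedIndep_link M ω r).symm
  · simp only [link_comm M _ z, sum_mul_wOrderedIndep_link]
  · simp only [link_comm M _ y, sum_mul_wOrderedIndep_link]
  · simp only [link_comm M _ y, link_comm (link M y) _ z, mul_left_comm _ c, ← Finset.mul_sum,
      sum_mul_wOrderedIndep_link]

theorem atlasForm_succ_apply (w w' : Option α → ℝ) :
    atlasForm M ω c (r + 1) w w' = ∑ x, ω x * atlasForm (link M x) ω c r w w' := by
  simp [atlasForm, atlasMatrix_succ, LinearMap.sum_apply]

theorem atlasMatrix_mulVec_weightVec (M : Finset α → Prop) (ω : α → ℝ) (c : ℝ) (r : ℕ) :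
    (atlasMatrix M ω c r).mulVec (weightVec ω) = fun i =>
      i.elim (wOrderedIndep M ω (r + 1)) fun x => c * wOrderedIndep (link M x) ω (r + 1) := by
  ext i
  rcases i with _ | x <;>
    simp only [Matrix.mulVec, dotProduct, Fintype.sum_option, atlasMatrix, weightVec,
      Option.elim_none, Option.elim_some, mul_zero, zero_add, ← sum_mul_wOrderedIndep_link,
      Finset.mul_sum]
  · exact Finset.sum_congr rfl fun x _ => mul_comm _ _
  · exact Finset.sum_congr rfl fun y _ => by ring

theorem atlasForm_weightVec_self : atlasForm M ω c r (weightVec ω) (weightVec ω) =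
    c * wOrderedIndep M ω (r + 2) := by
  rw [atlasForm, Matrix.toBilin'_apply', atlasMatrix_mulVec_weightVec]
  simp only [dotProduct, Fintype.sum_option, weightVec, Option.elim_none, Option.elim_some,
    zero_mul, zero_add, mul_left_comm _ c, ← Finset.mul_sum, sum_mul_wOrderedIndep_link]

theorem atlasForm_succ_apply_single (w : Option α → ℝ) (x : α) :
    atlasForm M ω c (r + 1) w (Pi.single (some x) 1) =
      atlasForm (link M x) ω c r w (weightVec ω) := by
  rw [atlasForm, atlasForm, Matrix.toBilin'_apply', Matrix.toBilin'_apply',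
    Matrix.mulVec_single_one, atlasMatrix_mulVec_weightVec]
  congr 1
  ext i
  rcases i with _ | y
  · rfl
  · simp only [Matrix.col_apply, atlasMatrix, Option.elim_some, link_comm M y]

theorem weightVec_eq_sum (ω : α → ℝ) :
    weightVec ω = ∑ x, ω x • Pi.single (some x) (1 : ℝ) := by
  ext i
  rcases i with _ | y <;> simp [weightVec, Finset.sum_apply, Pi.single_apply]

theorem IsMatroid.atlasForm_link_of_loop (hM : IsMatroid M) {x : α} (hx : ¬ M {x}) (ω : α → ℝ)
    (c : ℝ) (r : ℕ) : atlasForm (link M x) ω c r = 0 := by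
  have hlink := hM.not_link_of_loop hx
  have hmatrix : atlasMatrix (link M x) ω c r = 0 := by
    ext i j
    rcases i with _ | y <;> rcases j with _ | z
    · exact wOrderedIndep_eq_zero hlink ω r
    · exact wOrderedIndep_eq_zero (fun S hS => hlink _ hS.2) ω r
    · exact wOrderedIndep_eq_zero (fun S hS => hlink _ hS.2) ω r
    · exact mul_eq_zero_of_right c (wOrderedIndep_eq_zero (fun S hS => hlink _ hS.2.2) ω r)
  rw [atlasForm, hmatrix, map_zero]

theorem IsMatroid.wOrderedIndep_pos (hM : IsMatroid M) (hω : ∀ x, 0 < ω x)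
    (hr : r ≤ matroidRk M) : 0 < wOrderedIndep M ω r := by
  obtain ⟨S, -, hS, rfl⟩ := hM.exists_superset_card_eq hM.indep_empty (Nat.zero_le r) hr
  exact wOrderedIndep_card_pos hω hS

theorem IsMatroid.isHyperbolicAt_atlasForm_succ (hM : IsMatroid M) (hω : ∀ x, 0 < ω x)
    (hc : 0 < c) (hr : r + 3 ≤ matroidRk M)
    (hlink : ∀ x, M {x} → IsHyperbolicAt (atlasForm (link M x) ω c r) (weightVec ω)) :
    IsHyperbolicAt (atlasForm M ω c (r + 1)) (weightVec ω) := by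
  have sum_nonloops : ∀ w w', ∑ x, ω x * atlasForm (link M x) ω c r w w' =
      ∑ x : {x // M {x}}, ω x * atlasForm (link M x) ω c r w w' := by
    intro w w'
    refine (Fintype.sum_of_injective _ Subtype.val_injective _ _ (fun x hx => ?_)
      fun x => rfl).symm
    rw [hM.atlasForm_link_of_loop (by simpa using hx)]
    simp
  have hentry : ∀ x y, atlasForm M ω c (r + 1) (Pi.single (some x) 1) (Pi.single (some y) 1) =
      c * wOrderedIndep (link (link M x) y) ω (r + 1) := fun x y => Matrix.toBilin'_single _ _ _
  have hrk_link : ∀ x, M {x} → r + 2 ≤ matroidRk (link M x) := fun x hx => by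
    have := hM.matroidRk_le_link_add_one hx
    lia
  refine .of_local (ι := {x // M {x}}) (ω := fun x => ω x) (e := fun x => Pi.single (some x.1) 1)
    (Bloc := fun x => atlasForm (link M x) ω c r) (fun x => hω x) (atlasForm_isSymm ..)
    (fun w => ?_) (fun x w => atlasForm_succ_apply_single w x) (fun w => ?_)
    (fun x => atlasForm_isSymm ..) (fun x => ?_) (fun x => hlink x x.2) (fun x y => ?_)
    fun x y => .mono (fun x y hxy => ?_) _ _ (hM.pair_connected (by lia) x y)
  · rw [atlasForm_succ_apply, sum_nonloops]
  · simp only [atlasForm_succ_apply_single, ← sum_nonloops]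
    rw [weightVec_eq_sum ω, map_sum]
    simp only [map_smul, smul_eq_mul, atlasForm_succ_apply_single, ← weightVec_eq_sum]
  · rw [atlasForm_weightVec_self]
    exact mul_pos hc ((hM.isMatroid_link x.2).wOrderedIndep_pos hω (hrk_link x x.2))
  · rw [hentry]
    exact mul_nonneg hc.le (wOrderedIndep_nonneg fun x => (hω x).le)
  · have hy : link M x {y.1} := link_singleton_iff.2 ⟨Subtype.coe_ne_coe.2 hxy.1, hxy.2⟩
    have hrk := (hM.isMatroid_link x.2).matroidRk_le_link_add_one hy
    have := hrk_link x x.2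
    rw [hentry]
    exact mul_pos hc (((hM.isMatroid_link x.2).isMatroid_link hy).wOrderedIndep_pos hω (by lia))

end Atlas

section BaseCase

theorem mul_sum_sum_ite_le_sq {α κ : Type*} [DecidableEq κ] (K : Finset α) (cl : α → κ)
    (u : α → ℝ) {c : ℝ} (hc : 1 ≤ c) (hcard : ((K.image cl).card : ℝ) * (c - 1) ≤ c) :
    c * ∑ x ∈ K, ∑ y ∈ K, (if cl x = cl y then 0 else u x * u y) ≤ (∑ x ∈ K, u x) ^ 2 := by
  set s : κ → ℝ := fun p => ∑ x ∈ K with cl x = p, u x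
  have hmaps : ∀ x ∈ K, cl x ∈ K.image cl := fun x => Finset.mem_image_of_mem cl
  have htotal : ∑ p ∈ K.image cl, s p = ∑ x ∈ K, u x := Finset.sum_fiberwise_of_maps_to hmaps u
  have hsq : ∑ x ∈ K, u x * s (cl x) = ∑ p ∈ K.image cl, s p ^ 2 := by
    rw [← Finset.sum_fiberwise_of_maps_to hmaps]
    refine Finset.sum_congr rfl fun p _ => ?_
    rw [sq, Finset.sum_mul]
    exact Finset.sum_congr rfl fun x hx => by rw [(Finset.mem_filter.1 hx).2]
  have hrow : ∀ x, ∑ y ∈ K, (if cl x = cl y then 0 else u x * u y) =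
      u x * ∑ y ∈ K, u y - u x * s (cl x) := by
    intro x
    simp only [s, Finset.sum_filter, ← mul_sub, ← Finset.sum_sub_distrib, Finset.mul_sum]
    refine Finset.sum_congr rfl fun y _ => ?_
    simp only [eq_comm (a := cl y)]
    split_ifs <;> ring
  have hcs : (∑ x ∈ K, u x) ^ 2 ≤ (K.image cl).card * ∑ p ∈ K.image cl, s p ^ 2 :=
    htotal ▸ sq_sum_le_card_mul_sum_sq
  have hQ : 0 ≤ ∑ p ∈ K.image cl, s p ^ 2 := Finset.sum_nonneg fun p _ => sq_nonneg _
  have hle : (c - 1) * (∑ x ∈ K, u x) ^ 2 ≤ c * ∑ p ∈ K.image cl, s p ^ 2 :=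
    calc (c - 1) * (∑ x ∈ K, u x) ^ 2
        ≤ (c - 1) * ((K.image cl).card * ∑ p ∈ K.image cl, s p ^ 2) :=
          mul_le_mul_of_nonneg_left hcs (sub_nonneg.2 hc)
      _ = (K.image cl).card * (c - 1) * ∑ p ∈ K.image cl, s p ^ 2 := by ring
      _ ≤ c * ∑ p ∈ K.image cl, s p ^ 2 := mul_le_mul_of_nonneg_right hcard hQ
  simp only [hrow, Finset.sum_sub_distrib, ← Finset.sum_mul, hsq]
  linarith

variable {α : Type*} [Fintype α] [DecidableEq α] {M : Finset α → Prop} {ω : α → ℝ} {c : ℝ}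

theorem wOrderedIndep_link_zero (M : Finset α → Prop) (ω : α → ℝ) (x : α) :
    wOrderedIndep (link M x) ω 0 = if x ∈ mCont M ∅ then 1 else 0 := by
  simp [wOrderedIndep_zero, link, mem_mCont]

theorem IsMatroid.wOrderedIndep_link_link_zero (hM : IsMatroid M) (ω : α → ℝ) (x y : α) :
    wOrderedIndep (link (link M x) y) ω 0 =
      if x ∈ mCont M ∅ ∧ y ∈ mCont M ∅ ∧ mParClass M ∅ x ≠ mParClass M ∅ y then 1 else 0 := by
  rw [wOrderedIndep_zero]
  congr 1
  rw [link_empty_iff, link_singleton_iff, eq_iff_iff]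
  constructor
  · rintro ⟨hxy, hpair⟩
    have hx : x ∈ mCont M ∅ := mem_mCont.2 ⟨by simp, hM.hereditary _ _ (by simp) hpair⟩
    have hy : y ∈ mCont M ∅ := mem_mCont.2 ⟨by simp, hM.hereditary _ _ (by simp) hpair⟩
    exact ⟨hx, hy, (hM.mParClass_eq_iff hx hy).not.2 (by simp [hxy, hpair])⟩
  · rintro ⟨hx, hy, hne⟩
    simpa using (hM.mParClass_eq_iff hx hy).not.1 hne

theorem IsMatroid.atlasForm_zero_self (hM : IsMatroid M) (ω : α → ℝ) (c : ℝ)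
    (w : Option α → ℝ) :
    atlasForm M ω c 0 w w =
      w none ^ 2 + 2 * w none * ∑ x ∈ mCont M ∅, w (some x) +
        c * ∑ x ∈ mCont M ∅, ∑ y ∈ mCont M ∅,
          if mParClass M ∅ x = mParClass M ∅ y then 0 else w (some x) * w (some y) := by
  have hempty : wOrderedIndep M ω 0 = 1 := by rw [wOrderedIndep_zero, if_pos hM.indep_empty]
  have hlin : ∑ x, w (some x) * wOrderedIndep (link M x) ω 0 = ∑ x ∈ mCont M ∅, w (some x) := by
    simp [wOrderedIndep_link_zero M]
  have hquad : ∑ x, ∑ y, w (some x) * (c * wOrderedIndep (link (link M x) y) ω 0) * w (some y) =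
      c * ∑ x ∈ mCont M ∅, ∑ y ∈ mCont M ∅,
        if mParClass M ∅ x = mParClass M ∅ y then 0 else w (some x) * w (some y) := by
    simp only [hM.wOrderedIndep_link_link_zero, ite_and, mul_ite, ite_mul, mul_one, mul_zero,
      zero_mul, Finset.sum_ite_irrel, Finset.sum_const_zero, Finset.sum_ite_mem_eq, ite_not,
      ne_eq, Finset.mul_sum, mul_left_comm c, mul_assoc]
  rw [atlasForm, Matrix.toBilin'_apply]
  simp only [Fintype.sum_option, atlasMatrix, hempty, Finset.sum_add_distrib, hquad,
    ← Finset.sum_mul, hlin, mul_assoc (w none), mul_comm (wOrderedIndep _ _ _), ← Finset.mul_sum]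
  ring

theorem IsMatroid.isHyperbolicAt_atlasForm_zero (hM : IsMatroid M) (hω : ∀ x, 0 < ω x)
    (hc : 1 ≤ c) (hrk : 2 ≤ matroidRk M) (hcont : (contNum M 0 : ℝ) * (c - 1) ≤ c) :
    IsHyperbolicAt (atlasForm M ω c 0) (weightVec ω) := by
  have hpos : 0 < atlasForm M ω c 0 (weightVec ω) (weightVec ω) := by
    rw [atlasForm_weightVec_self]
    exact mul_pos (by linarith) (hM.wOrderedIndep_pos hω hrk)
  have hcard : ((mParClasses M ∅).card : ℝ) * (c - 1) ≤ c := by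
    refine le_trans (mul_le_mul_of_nonneg_right ?_ (sub_nonneg.2 hc)) hcont
    exact_mod_cast card_mParClasses_le_contNum hM.indep_empty
  refine .of_le_sq (atlasForm_isSymm ..) hpos
    (LinearMap.proj none + ∑ x ∈ mCont M ∅, LinearMap.proj (some x)) fun w => ?_
  have hturan := mul_sum_sum_ite_le_sq (mCont M ∅) (mParClass M ∅) (fun x => w (some x)) hc hcard
  simp only [hM.atlasForm_zero_self, LinearMap.add_apply, LinearMap.sum_apply, LinearMap.proj_apply]
  linarith

end BaseCase

section LogConcavity

variable {α : Type*} [Fintype α] [DecidableEq α] {M : Finset α → Prop} {ω : α → ℝ} {c : ℝ} {r : ℕ}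

theorem IsMatroid.isHyperbolicAt_atlasForm (hM : IsMatroid M) (hω : ∀ x, 0 < ω x) (hc : 1 ≤ c)
    (hrk : r + 2 ≤ matroidRk M) (hcont : (contNum M r : ℝ) * (c - 1) ≤ c) :
    IsHyperbolicAt (atlasForm M ω c r) (weightVec ω) := by
  induction r generalizing M with
  | zero => exact hM.isHyperbolicAt_atlasForm_zero hω hc hrk hcont
  | succ r ih =>
    refine hM.isHyperbolicAt_atlasForm_succ hω (by linarith) hrk fun x hx =>
      ih (hM.isMatroid_link hx) ?_ ?_
    · have := hM.matroidRk_le_link_add_one hx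
      lia
    · refine le_trans (mul_le_mul_of_nonneg_right ?_ (sub_nonneg.2 hc)) hcont
      exact_mod_cast contNum_link_le M x r

theorem IsMatroid.mul_wOrderedIndep_mul_le_sq (hM : IsMatroid M) (hω : ∀ x, 0 < ω x) (hc : 1 ≤ c)
    (hrk : r + 2 ≤ matroidRk M) (hcont : (contNum M r : ℝ) * (c - 1) ≤ c) :
    c * wOrderedIndep M ω r * wOrderedIndep M ω (r + 2) ≤ wOrderedIndep M ω (r + 1) ^ 2 := by
  have hpos : 0 < atlasForm M ω c r (weightVec ω) (weightVec ω) := by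
    rw [atlasForm_weightVec_self]
    exact mul_pos (by linarith) (hM.wOrderedIndep_pos hω hrk)
  have h := (hM.isHyperbolicAt_atlasForm hω hc hrk hcont).mul_le_sq (atlasForm_isSymm ..) hpos
    (Pi.single none 1)
  have hcross : atlasForm M ω c r (Pi.single none 1) (weightVec ω) = wOrderedIndep M ω (r + 1) := by
    rw [atlasForm, Matrix.toBilin'_apply', atlasMatrix_mulVec_weightVec, single_one_dotProduct,
      Option.elim_none]
  have hself : atlasForm M ω c r (Pi.single none 1) (Pi.single none 1) = wOrderedIndep M ω r :=
    Matrix.toBilin'_single _ _ _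
  rw [hcross, hself, atlasForm_weightVec_self] at h
  linarith

end LogConcavity

/-- **Refined weighted log-concavity for matroids.** -/
theorem matroid_refined_weighted_log_concavity
    (Indep : Finset X → Prop)
    (h_ne : ∃ S : Finset X, Indep S)
    (h_hered : ∀ S T : Finset X, S ⊆ T → Indep T → Indep S)
    (h_exch : ∀ S T : Finset X, Indep S → Indep T → S.card < T.card →
      ∃ x ∈ T, x ∉ S ∧ Indep (insert x S))
    (ω : X → ℝ) (hω : ∀ x, 0 < ω x)
    (k : ℕ) (hk1 : 1 ≤ k) (hk2 : k < matroidRk Indep) :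
    ((1 : ℝ) + 1 / (k : ℝ)) * (1 + 1 / ((contNum Indep (k - 1) : ℝ) - 1)) *
        wNumIndep Indep ω (k - 1) * wNumIndep Indep ω (k + 1) ≤
      (wNumIndep Indep ω k) ^ 2 := by
  have hM : IsMatroid Indep := ⟨h_ne, h_hered, h_exch⟩
  obtain ⟨r, rfl⟩ : ∃ r, k = r + 1 := Nat.exists_eq_succ_of_ne_zero (by lia)
  rw [Nat.add_sub_cancel]
  set p : ℝ := (contNum Indep r : ℝ)
  have hp : 0 < p - 1 := by
    have : (2 : ℝ) ≤ p := Nat.ofNat_le_cast.2 (hM.two_le_contNum hk2)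
    linarith
  refine (wOrderedIndep_mul_le_sq_iff Indep ω _ r).1
    (hM.mul_wOrderedIndep_mul_le_sq hω ?_ hk2 (le_of_eq ?_))
  · exact le_add_of_nonneg_right (one_div_pos.2 hp).le
  · field_simp
    ring
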